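/- Let β ∈ (1,2) with δ(β) = (1^m 0)^∞ for some m ≥ 1, and let t ∈ E_β be such that its greedy β-expansion (t_i) is periodic with minimal period N (i.e., N is the smallest positive integer with σ^N((t_i)) = (t_i)). Then t_1…t_N is a β-Lyndon word; in particular t is the right endpoint t_R of the β-Lyndon interval generated by t_1…t_N. -/

import Mathlib

open Set Filter MeasureTheory

/-- The β-transformation `x ↦ βx (mod 1)`. -/
noncomputable def Tbeta (β x : ℝ) : ℝ := Int.fract (β * x)

/-- The survivor set `K_β(t) = {x ∈ [0,1) : T_β^n x ≥ t for all n ≥ 0}`. -/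
def Kset (β t : ℝ) : Set ℝ := {x | x ∈ Set.Ico (0 : ℝ) 1 ∧ ∀ n : ℕ, t ≤ (Tbeta β)^[n] x}

/-- Strict lexicographic order on sequences of naturals. -/
def seqLt (x y : ℕ → ℕ) : Prop := ∃ n, (∀ i, i < n → x i = y i) ∧ x n < y n

/-- Lexicographic order on sequences of naturals. -/
def seqLe (x y : ℕ → ℕ) : Prop := x = y ∨ seqLt x y

/-- The `n`-th iterate of the left shift. -/
def shiftN (n : ℕ) (x : ℕ → ℕ) : ℕ → ℕ := fun i => x (i + n)

/-- The sequence `w 0^∞`. -/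
def wordSeq (w : List ℕ) : ℕ → ℕ := fun i => w.getD i 0

/-- The periodic sequence `w^∞`. -/
def perSeq (w : List ℕ) : ℕ → ℕ := fun i => w.getD (i % w.length) 0

/-- The sequence obtained by concatenating the word `w` with the sequence `x`. -/
def catSeq (w : List ℕ) (x : ℕ → ℕ) : ℕ → ℕ :=
  fun i => if i < w.length then w.getD i 0 else x (i - w.length)

/-- The greedy β-expansion of `t`: the digit `b_{i+1}` is `⌊β T_β^i t⌋`. -/
noncomputable def greedy (β t : ℝ) : ℕ → ℕ := fun i => (⌊β * (Tbeta β)^[i] t⌋).toNat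

/-- `d` is the quasi-greedy β-expansion of `1`: the lexicographically largest
sequence in `{0,1}^ℕ` not ending in `0^∞` whose digits sum to `1` in base `β`. -/
def IsQuasiGreedy (β : ℝ) (d : ℕ → ℕ) : Prop :=
  (∀ i, d i ≤ 1) ∧ (¬ ∃ N, ∀ n, N ≤ n → d n = 0) ∧
  (∑' i : ℕ, (d i : ℝ) / β ^ (i + 1) = 1) ∧
  ∀ e : ℕ → ℕ, (∀ i, e i ≤ 1) → (¬ ∃ N, ∀ n, N ≤ n → e n = 0) →
    (∑' i : ℕ, (e i : ℝ) / β ^ (i + 1) = 1) → seqLe e d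

/-- `s = s_1…s_p` is a β-Lyndon word: `s_{i+1}…s_p ≻ s_1…s_{p-i}` for `1 ≤ i < p`
and `σ^n(s^∞) ≺ δ(β)` for all `n ≥ 0`. -/
def IsBetaLyndon (β : ℝ) (s : List ℕ) : Prop :=
  s ≠ [] ∧ (∀ a ∈ s, a ≤ 1) ∧
  (∀ i, 1 ≤ i → i < s.length →
    seqLt (wordSeq (s.take (s.length - i))) (wordSeq (s.drop i))) ∧
  (∀ d : ℕ → ℕ, IsQuasiGreedy β d → ∀ n : ℕ, seqLt (shiftN n (perSeq s)) d)

/-- Left endpoint `t_L = Σ_{i=1}^p s_i β^{-i}` of the β-Lyndon interval generated by `s`. -/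
noncomputable def lyndonLeft (β : ℝ) (s : List ℕ) : ℝ :=
  ∑ i ∈ Finset.range s.length, (s.getD i 0 : ℝ) / β ^ (i + 1)

/-- Right endpoint `t_R = (β^p/(β^p - 1)) t_L` of the β-Lyndon interval generated by `s`. -/
noncomputable def lyndonRight (β : ℝ) (s : List ℕ) : ℝ :=
  β ^ s.length / (β ^ s.length - 1) * lyndonLeft β s

/-- The union of all β-Lyndon intervals `[t_L, t_R)`. -/
noncomputable def lyndonUnionIco (β : ℝ) : Set ℝ :=
  ⋃ s ∈ {s : List ℕ | IsBetaLyndon β s}, Set.Ico (lyndonLeft β s) (lyndonRight β s)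

/-- The symbolic survivor set `K̃_β(t)` with upper bound sequence `d = δ(β)`. -/
def Ktilde (β t : ℝ) (d : ℕ → ℕ) : Set (ℕ → ℕ) :=
  {x | (∀ i, x i ≤ 1) ∧ ∀ n : ℕ, seqLe (greedy β t) (shiftN n x) ∧ seqLe (shiftN n x) d}

/-- The set-valued bifurcation set `E_β`. -/
def Eset (β : ℝ) : Set ℝ :=
  {t | t ∈ Set.Ico (0 : ℝ) 1 ∧ ∀ t', t < t' → t' < 1 → Kset β t' ≠ Kset β t}

/-- The dimension bifurcation set `B_β`. -/
def Bset (β : ℝ) : Set ℝ :=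
  {t | t ∈ Set.Ico (0 : ℝ) 1 ∧ ∀ t', t < t' → t' < 1 → dimH (Kset β t') ≠ dimH (Kset β t)}

/-- `β` is a multinacci number: `β^{m+1} = β^m + ⋯ + β + 1` for some `m ≥ 1`. -/
def IsMultinacci (β : ℝ) : Prop :=
  ∃ m : ℕ, 1 ≤ m ∧ β ^ (m + 1) = ∑ i ∈ Finset.range (m + 1), β ^ i


lemma Tb_mem (β x : ℝ) : Tbeta β x ∈ Set.Ico (0:ℝ) 1 := ⟨Int.fract_nonneg _, Int.fract_lt_one _⟩

lemma Tbn_mem (β x : ℝ) (hx : x ∈ Set.Ico (0:ℝ) 1) (n : ℕ) :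
    (Tbeta β)^[n] x ∈ Set.Ico (0:ℝ) 1 := by
  cases n with
  | zero => simpa using hx
  | succ n => rw [Function.iterate_succ_apply']; exact Tb_mem _ _

lemma greedy_rec (β x : ℝ) (hβ : 1 < β) (hx : x ∈ Set.Ico (0:ℝ) 1) (n : ℕ) :
    β * (Tbeta β)^[n] x = greedy β x n + (Tbeta β)^[n+1] x := by
  have h := Tbn_mem β x hx n
  rw [Function.iterate_succ_apply']
  unfold greedy Tbeta
  have h0 : 0 ≤ ⌊β * (Tbeta β)^[n] x⌋ := Int.floor_nonneg.2 (mul_nonneg (by linarith) h.1)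
  have h1 : ((⌊β * (Tbeta β)^[n] x⌋.toNat : ℕ) : ℝ) = (⌊β * (Tbeta β)^[n] x⌋ : ℝ) := by
    exact_mod_cast Int.toNat_of_nonneg h0
  unfold Tbeta at h1
  rw [h1]
  exact (Int.floor_add_fract _).symm

lemma greedy_le_one (β x : ℝ) (hβ : β ∈ Set.Ioo (1:ℝ) 2) (hx : x ∈ Set.Ico (0:ℝ) 1) (n : ℕ) :
    greedy β x n ≤ 1 := by
  have h := Tbn_mem β x hx n
  have h' := Tbn_mem β x hx (n+1)
  have hr := greedy_rec β x hβ.1 hx n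
  have : (greedy β x n : ℝ) < 2 := by nlinarith [h.1, h.2, h'.1, hβ.1, hβ.2]
  have : greedy β x n < 2 := by exact_mod_cast this
  omega

lemma greedy_shift (β x : ℝ) (n : ℕ) : greedy β ((Tbeta β)^[n] x) = shiftN n (greedy β x) := by
  funext i
  simp only [greedy, shiftN, ← Function.iterate_add_apply]

lemma greedy_sum (β x : ℝ) (hβ : 1 < β) (hx : x ∈ Set.Ico (0:ℝ) 1) (n : ℕ) :
    x = ∑ i ∈ Finset.range n, (greedy β x i : ℝ) / β ^ (i+1) + (Tbeta β)^[n] x / β ^ n := by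
  induction n with
  | zero => simp
  | succ n ih =>
    have hr := greedy_rec β x hβ hx n
    have hb : β ≠ 0 := by linarith
    rw [Finset.sum_range_succ, add_assoc, ← add_div, ← hr]
    rw [pow_succ', mul_div_mul_left _ _ hb]
    exact ih

lemma greedy_inj (β x y : ℝ) (hβ : 1 < β) (hx : x ∈ Set.Ico (0:ℝ) 1) (hy : y ∈ Set.Ico (0:ℝ) 1)
    (h : greedy β x = greedy β y) : x = y := by
  have key : ∀ n : ℕ, |x - y| * β ^ n ≤ 1 := by
    intro n
    have hp : 0 < β ^ n := by positivity
    have h1 := greedy_sum β x hβ hx n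
    have h2 := greedy_sum β y hβ hy n
    rw [h] at h1
    have h3 : (x - y) * β ^ n = (Tbeta β)^[n] x - (Tbeta β)^[n] y := by
      have : x - y = ((Tbeta β)^[n] x - (Tbeta β)^[n] y) / β ^ n := by
        rw [sub_div]; linarith
      rw [this]; field_simp
    rw [← abs_of_pos hp, ← abs_mul, h3, abs_le]
    have a := Tbn_mem β x hx n
    have b := Tbn_mem β y hy n
    constructor <;> linarith [a.1, a.2, b.1, b.2]
  by_contra hne
  have hpos : 0 < |x - y| := abs_pos.2 (sub_ne_zero.2 hne)
  obtain ⟨n, hn⟩ := pow_unbounded_of_one_lt (1 / |x - y|) hβ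
  rw [div_lt_iff₀ hpos] at hn
  linarith [key n]

lemma iter_agree (β x y : ℝ) (hβ : 1 < β) (hx : x ∈ Set.Ico (0:ℝ) 1) (hy : y ∈ Set.Ico (0:ℝ) 1)
    (hxy : x ≤ y) (n : ℕ) (h : ∀ i, i < n → greedy β x i = greedy β y i) :
    (Tbeta β)^[n] x ≤ (Tbeta β)^[n] y := by
  induction n with
  | zero => simpa using hxy
  | succ n ih =>
    have h1 := ih (fun i hi => h i (by omega))
    have a := greedy_rec β x hβ hx n
    have b := greedy_rec β y hβ hy n
    rw [h n (by omega)] at a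
    nlinarith

lemma greedy_mono (β x y : ℝ) (hβ : 1 < β) (hx : x ∈ Set.Ico (0:ℝ) 1) (hy : y ∈ Set.Ico (0:ℝ) 1)
    (hxy : x ≤ y) : seqLe (greedy β x) (greedy β y) := by
  classical
  by_cases he : greedy β x = greedy β y
  · exact Or.inl he
  right
  have hex : ∃ n, greedy β x n ≠ greedy β y n := by
    by_contra hc
    push Not at hc
    exact he (funext hc)
  refine ⟨Nat.find hex, fun i hi => not_not.1 (Nat.find_min hex hi), ?_⟩
  have hne := Nat.find_spec hex
  have hle := iter_agree β x y hβ hx hy hxy (Nat.find hex)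
    (fun i hi => not_not.1 (Nat.find_min hex hi))
  refine lt_of_le_of_ne ?_ hne
  apply Int.toNat_le_toNat
  apply Int.floor_le_floor
  exact mul_le_mul_of_nonneg_left hle (by linarith)

lemma right_lin (β : ℝ) (hβ : 1 < β) (n : ℕ) : ∀ x : ℝ, ∃ ε > 0, ∀ z, x ≤ z → z < x + ε →
    (Tbeta β)^[n] z = (Tbeta β)^[n] x + β ^ n * (z - x) := by
  induction n with
  | zero => intro x; exact ⟨1, one_pos, fun z _ _ => by simp⟩
  | succ n ih =>
    intro x
    obtain ⟨ε, hε, H⟩ := ih (Tbeta β x)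
    have hf := Int.fract_lt_one (β * x)
    have hf0 := Int.fract_nonneg (β * x)
    have hb : 0 < β := by linarith
    refine ⟨min ((1 - Int.fract (β * x)) / β) (ε / β), lt_min (div_pos (by linarith) hb)
      (div_pos hε hb), fun z hz hz2 => ?_⟩
    have h1 : z - x < (1 - Int.fract (β * x)) / β := by
      have := min_le_left ((1 - Int.fract (β * x)) / β) (ε / β); linarith
    have h2 : z - x < ε / β := by
      have := min_le_right ((1 - Int.fract (β * x)) / β) (ε / β); linarith
    rw [lt_div_iff₀ hb] at h1 h2
    have hp : 0 ≤ (z - x) * β := mul_nonneg (by linarith) hb.le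
    have hT : Tbeta β z = Tbeta β x + β * (z - x) := by
      unfold Tbeta
      rw [Int.fract_eq_iff]
      refine ⟨by linarith, by linarith, ⌊β * x⌋, ?_⟩
      have := Int.floor_add_fract (β * x)
      linarith
    rw [Function.iterate_succ_apply, Function.iterate_succ_apply, H _ (by linarith) (by linarith),
      hT]
    ring

lemma E_self (β : ℝ) (hβ : 1 < β) (t : ℝ) (ht : t ∈ Eset β) (n : ℕ) :
    t ≤ (Tbeta β)^[n] t := by
  by_contra hlt
  push Not at hlt
  obtain ⟨⟨ht0, ht1⟩, hE⟩ := ht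
  obtain ⟨ε, hε, H⟩ := right_lin β hβ n t
  have hp : 0 < β ^ n := by positivity
  set η := min ε (min (1 - t) ((t - (Tbeta β)^[n] t) / β ^ n)) / 2 with hη
  have hmin : 0 < min ε (min (1 - t) ((t - (Tbeta β)^[n] t) / β ^ n)) :=
    lt_min hε (lt_min (by linarith) (div_pos (by linarith) hp))
  have hm1 := min_le_left ε (min (1 - t) ((t - (Tbeta β)^[n] t) / β ^ n))
  have hm2 := (min_le_right ε (min (1 - t) ((t - (Tbeta β)^[n] t) / β ^ n))).trans (min_le_left _ _)
  have hm3 := (min_le_right ε (min (1 - t) ((t - (Tbeta β)^[n] t) / β ^ n))).trans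
    (min_le_right _ _)
  apply hE (t + η) (by linarith) (by linarith)
  ext x
  constructor
  · rintro ⟨hx, h⟩
    exact ⟨hx, fun k => by linarith [h k]⟩
  · rintro ⟨hx, h⟩
    refine ⟨hx, fun k => ?_⟩
    by_contra hk
    push Not at hk
    have h1 := H _ (h k) (by linarith)
    have h2 := h (n + k)
    rw [Function.iterate_add_apply, h1] at h2
    have h3 : (Tbeta β)^[k] x - t < (t - (Tbeta β)^[n] t) / β ^ n := by linarith
    rw [lt_div_iff₀ hp] at h3
    linarith

lemma seqLt_asymm_le {x y : ℕ → ℕ} (h : seqLt x y) (h' : seqLe y x) : False := by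
  obtain ⟨n, hn, hlt⟩ := h
  rcases h' with rfl | ⟨k, hk, hlt'⟩
  · omega
  · rcases lt_trichotomy n k with hc | hc | hc
    · have := hk n hc; omega
    · subst hc; omega
    · have := hn k hc; omega

lemma delta_apply (m i : ℕ) : perSeq (List.replicate m 1 ++ [0]) i
    = if i % (m+1) < m then 1 else 0 := by
  unfold perSeq
  simp only [List.length_append, List.length_replicate, List.length_singleton]
  split_ifs with h
  · rw [List.getD_append _ _ _ _ (by simpa using h)]
    simp [List.getD_eq_getElem?_getD, h]
  · have h2 : i % (m+1) = m := by have := Nat.mod_lt i (show m + 1 > 0 by omega); omega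
    rw [h2, List.getD_append_right _ _ _ _ (by simp)]
    simp

lemma delta_val (β : ℝ) (hβ : 1 < β) (m : ℕ)
    (h : ∑' i : ℕ, ((perSeq (List.replicate m 1 ++ [0]) i : ℕ) : ℝ) / β ^ (i + 1) = 1) :
    ∑ i ∈ Finset.range m, (1:ℝ) / β ^ (i+1) + 1 / β ^ (m+1) = 1 := by
  have hb : 0 < β := by linarith
  have hg : Summable (fun i : ℕ => (1:ℝ) / β ^ (i+1)) := by
    have := (summable_geometric_of_lt_one (r := 1/β) (by positivity)
      (by rw [div_lt_one hb]; exact hβ)).mul_left (1/β)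
    refine this.congr (fun i => ?_)
    rw [one_div_pow, pow_succ]; field_simp
  have hs : Summable (fun i : ℕ => ((perSeq (List.replicate m 1 ++ [0]) i : ℕ) : ℝ) / β ^ (i + 1)) := by
    refine Summable.of_nonneg_of_le (fun i => by positivity) (fun i => ?_) hg
    apply div_le_div_of_nonneg_right _ (by positivity)
    rw [delta_apply]; split_ifs <;> simp
  have h1 := hs.sum_add_tsum_nat_add (m+1)
  have h2 : ∀ i : ℕ, ((perSeq (List.replicate m 1 ++ [0]) (i + (m+1)) : ℕ) : ℝ) / β ^ (i + (m+1) + 1)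
      = (1 / β ^ (m+1)) * (((perSeq (List.replicate m 1 ++ [0]) i : ℕ) : ℝ) / β ^ (i + 1)) := by
    intro i
    rw [delta_apply, delta_apply, Nat.add_mod_right, show i + (m+1) + 1 = (m+1) + (i+1) by ring,
      pow_add β (m+1) (i+1)]
    field_simp
  rw [tsum_congr h2, tsum_mul_left, h, Finset.sum_range_succ] at h1
  rw [delta_apply, Nat.mod_eq_of_lt (Nat.lt_succ_self m)] at h1
  simp only [lt_irrefl, if_false, Nat.cast_zero, zero_div, add_zero, mul_one] at h1
  refine Eq.trans ?_ h1
  congr 1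
  apply Finset.sum_congr rfl
  intro i hi
  have hi := Finset.mem_range.1 hi
  rw [delta_apply, Nat.mod_eq_of_lt (by omega), if_pos hi, Nat.cast_one]

lemma greedy_lt_delta (β : ℝ) (hβ : β ∈ Set.Ioo (1:ℝ) 2) (m : ℕ)
    (hv : ∑ i ∈ Finset.range m, (1:ℝ) / β ^ (i+1) + 1 / β ^ (m+1) = 1)
    (y : ℝ) (hy : y ∈ Set.Ico (0:ℝ) 1) :
    seqLt (greedy β y) (perSeq (List.replicate m 1 ++ [0])) := by
  classical
  have hβ1 := hβ.1
  have hb : 0 < β := by linarith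
  have hex : ∃ n, greedy β y n ≠ perSeq (List.replicate m 1 ++ [0]) n := by
    by_contra hc
    push Not at hc
    have hT : (Tbeta β)^[m+1] y = y := by
      apply greedy_inj β _ _ hβ1 (Tbn_mem β y hy _) hy
      rw [greedy_shift]
      funext i
      simp only [shiftN]
      rw [hc, hc, delta_apply, delta_apply, Nat.add_mod_right]
    have hs := greedy_sum β y hβ1 hy (m+1)
    rw [hT, Finset.sum_range_succ, hc m, delta_apply, Nat.mod_eq_of_lt (Nat.lt_succ_self m)] at hs
    rw [Finset.sum_congr rfl (g := fun i => (1:ℝ) / β ^ (i+1)) (fun i hi => by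
      have hi := Finset.mem_range.1 hi
      rw [hc, delta_apply, Nat.mod_eq_of_lt (by omega), if_pos hi, Nat.cast_one])] at hs
    simp only [lt_irrefl, if_false, Nat.cast_zero, zero_div, add_zero] at hs
    have hlt : 1 / β ^ (m+1) < 1 := by
      rw [div_lt_one (by positivity)]; exact one_lt_pow₀ hβ1 (by omega)
    have e : y / β ^ (m+1) = y * (1 / β ^ (m+1)) := by ring
    rw [e] at hs
    nlinarith [hy.2]
  refine ⟨Nat.find hex, fun i hi => not_not.1 (Nat.find_min hex hi), ?_⟩
  have hne := Nat.find_spec hex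
  have hag : ∀ i, i < Nat.find hex → greedy β y i = perSeq (List.replicate m 1 ++ [0]) i :=
    fun i hi => not_not.1 (Nat.find_min hex hi)
  generalize Nat.find hex = k at *
  refine lt_of_le_of_ne ?_ hne
  rw [delta_apply] at hne ⊢
  split_ifs with hk
  · exact greedy_le_one β y hβ hy k
  · exfalso
    rw [if_neg hk] at hne
    have hk1 : greedy β y k = 1 := by have := greedy_le_one β y hβ hy k; omega
    have hkm : k % (m+1) = m := by have := Nat.mod_lt k (show m + 1 > 0 by omega); omega
    have hdm := Nat.div_add_mod k (m+1)
    rw [hkm] at hdm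
    set q := (m+1) * (k/(m+1)) with hq
    have hz := Tbn_mem β y hy q
    have hs := greedy_sum β _ hβ1 hz (m+1)
    rw [Finset.sum_congr rfl (g := fun i => (1:ℝ) / β ^ (i+1)) (fun i hi => by
      have hi := Finset.mem_range.1 hi
      rw [greedy_shift]
      simp only [shiftN]
      rcases Nat.lt_or_ge i m with him | him
      · rw [hag (i+q) (by omega), delta_apply, hq, Nat.add_mul_mod_self_left,
          Nat.mod_eq_of_lt (by omega), if_pos him, Nat.cast_one]
      · rw [show i + q = k by omega, hk1, Nat.cast_one]), Finset.sum_range_succ, hv] at hs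
    have : 0 ≤ (Tbeta β)^[m+1] ((Tbeta β)^[q] y) / β ^ (m+1) :=
      div_nonneg (Tbn_mem β _ hz _).1 (by positivity)
    linarith [hz.2]

lemma lyndon_aux (g : ℕ → ℕ) (N : ℕ) (hper : shiftN N g = g)
    (hminN : ∀ k, 0 < k → k < N → shiftN k g ≠ g) (hge : ∀ k, seqLe g (shiftN k g))
    (i : ℕ) (hi : 1 ≤ i) (hiN : i < N) :
    ∃ n, n < N - i ∧ (∀ j, j < n → g j = g (j + i)) ∧ g n < g (n + i) := by
  rcases hge i with h | ⟨n, hn, hlt⟩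
  · exact absurd h.symm (hminN i hi hiN)
  refine ⟨n, ?_, hn, hlt⟩
  by_contra hc
  push Not at hc
  apply seqLt_asymm_le (x := shiftN (N - i) g) (y := g) _ (hge (N - i))
  have hp : ∀ j, g (j + N) = g j := fun j => congrFun hper j
  refine ⟨n - (N - i), fun j hj => ?_, ?_⟩
  · have := hn (j + (N - i)) (by omega)
    simp only [shiftN] at this ⊢
    rw [this, ← hp j]; congr 1; omega
  · simp only [shiftN] at hlt ⊢
    rw [← hp (n - (N - i))]
    rw [show n - (N-i) + (N-i) = n by omega, show n - (N-i) + N = n + i by omega]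
    exact hlt

/-- Let `β ∈ (1,2)` with `δ(β) = (1^m 0)^∞` for some `m ≥ 1`, and let
`t ∈ E_β` have periodic greedy β-expansion `(t_i)` with minimal period `N`. Then
`t_1…t_N` is a β-Lyndon word and `t` is the right endpoint of the β-Lyndon interval
it generates. -/
theorem stmt_15 (β : ℝ) (hβ : β ∈ Set.Ioo (1 : ℝ) 2) (m : ℕ) (hm : 1 ≤ m)
    (hδ : IsQuasiGreedy β (perSeq (List.replicate m 1 ++ [0])))
    (t : ℝ) (ht : t ∈ Eset β)
    (N : ℕ) (hN : 0 < N) (hper : shiftN N (greedy β t) = greedy β t)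
    (hminN : ∀ k, 0 < k → k < N → shiftN k (greedy β t) ≠ greedy β t)
    (w : List ℕ) (hw : w = List.ofFn fun i : Fin N => greedy β t i) :
    IsBetaLyndon β w ∧ t = lyndonRight β w := by
  have hβ1 := hβ.1
  have ht01 : t ∈ Set.Ico (0:ℝ) 1 := ht.1
  set g := greedy β t with hg
  have hp : ∀ j, g (j + N) = g j := fun j => congrFun hper j
  have hpm : ∀ j, g (j % N) = g j := by
    intro j
    have : Function.Periodic g N := hp
    exact this.map_mod_nat j
  have hlen : w.length = N := by rw [hw]; simp
  have hget : ∀ i, i < N → w.getD i 0 = g i := by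
    intro i hi
    rw [List.getD_eq_getElem _ _ (by omega)]
    subst hw
    simp
  have hge : ∀ k, seqLe g (shiftN k g) := by
    intro k
    rw [hg, ← greedy_shift]
    exact greedy_mono β _ _ hβ1 ht01 (Tbn_mem β t ht01 k) (E_self β hβ1 t ht k)
  refine ⟨⟨?_, ?_, ?_, ?_⟩, ?_⟩
  · rintro rfl
    simp at hlen; omega
  · intro a ha
    rw [hw, List.mem_ofFn] at ha
    obtain ⟨i, rfl⟩ := ha
    exact greedy_le_one β t hβ ht01 i
  · intro i hi hiN
    rw [hlen] at hiN ⊢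
    obtain ⟨n, hnN, hn, hlt⟩ := lyndon_aux g N hper hminN hge i hi hiN
    have ha : ∀ j, j < N - i → wordSeq (w.take (N - i)) j = g j := by
      intro j hj
      rw [← hget j (by omega)]
      simp [wordSeq, List.getD_eq_getElem?_getD, List.getElem?_take, hj]
    have hb : ∀ j, j < N - i → wordSeq (w.drop i) j = g (j + i) := by
      intro j hj
      rw [← hget (j + i) (by omega)]
      simp [wordSeq, List.getD_eq_getElem?_getD, List.getElem?_drop, add_comm]
    refine ⟨n, fun j hj => ?_, ?_⟩
    · rw [ha j (by omega), hb j (by omega)]; exact hn j hj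
    · rw [ha n hnN, hb n hnN]; exact hlt
  · intro d hd n
    have hdd : d = perSeq (List.replicate m 1 ++ [0]) := by
      rcases hδ.2.2.2 d hd.1 hd.2.1 hd.2.2.1 with h | h
      · exact h
      · exact (seqLt_asymm_le h (hd.2.2.2 _ hδ.1 hδ.2.1 hδ.2.2.1)).elim
    have hps : perSeq w = g := by
      funext i
      unfold perSeq
      rw [hlen, hget _ (Nat.mod_lt _ hN), hpm]
    rw [hdd, hps, hg, ← greedy_shift]
    exact greedy_lt_delta β hβ m (delta_val β hβ1 m hδ.2.2.1) _ (Tbn_mem β t ht01 n)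
  · have hT : (Tbeta β)^[N] t = t := by
      apply greedy_inj β _ _ hβ1 (Tbn_mem β t ht01 _) ht01
      rw [greedy_shift]; exact hper
    have hs := greedy_sum β t hβ1 ht01 N
    rw [hT] at hs
    have hl : lyndonLeft β w = ∑ i ∈ Finset.range N, (greedy β t i : ℝ) / β ^ (i+1) := by
      unfold lyndonLeft
      rw [hlen]
      apply Finset.sum_congr rfl
      intro i hi
      rw [hget i (Finset.mem_range.1 hi)]
    unfold lyndonRight
    rw [hl, hlen]
    have h1 : 1 < β ^ N := one_lt_pow₀ hβ1 (by omega)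
    generalize ∑ i ∈ Finset.range N, (greedy β t i : ℝ) / β ^ (i+1) = S at *
    have h2 : β ^ N - 1 ≠ 0 := by linarith
    have h3 : β ^ N ≠ 0 := by linarith
    have hS : S = t - t / β ^ N := by linarith
    rw [hS]
    field_simp
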